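/- There exists κ ≥ 1 with the following property: for every r > 0, every ε ∈ (0, 1/16], and every continuously differentiable function f on the closed ball B̄_r ⊆ ℝ³, sup_{s ∈ [(1−ε)r, r]} ∫_{∂B_s} f² dσ ≤ κ·( ∫_{∂B_r} f² dσ + ε·r·∫_{B_r} |∇f|² dx ). -/

import Mathlib

open MeasureTheory Metric

noncomputable section

/-!
On the ray through a unit vector `ω`, the fundamental theorem of calculus and the Cauchy–Schwarz
inequality bound `‖f (rω) - f (sω)‖²` by `r - s` times the integral of `‖fderiv ℝ f (tω)‖²` over
`t ∈ (s, r)`. Multiplying by `sⁿ⁻¹`, which is at most `tⁿ⁻¹`, and integrating over `ω` turns the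
right-hand side into an integral over the ball in polar coordinates.

Polar coordinates produce the measure `μ.toSphere` on directions, whereas the sphere integrals use
`μH[n - 1]`. Only the domination `μH[n - 1] ≤ C • μ.toSphere` is needed: caps of radius `ρ` have
`toSphere`-measure at least a multiple of `ρⁿ⁻¹`, and the Vitali covering lemma turns this lower
bound into an upper bound for the Hausdorff measure.
-/

section DensityComparison

open Set Filter
open scoped ENNReal NNReal Topology

section

variable {X : Type*} [PseudoMetricSpace X]

theorem ediam_closedBall_le (x : X) {ρ : ℝ} (hρ : 0 ≤ ρ) :
    ediam (closedBall x ρ) ≤ 2 * ENNReal.ofReal ρ := by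
  rw [← closedEBall_ofReal hρ]
  exact ediam_closedEBall_le

theorem exists_countable_disjoint_closedBall_cover [TopologicalSpace.SeparableSpace X]
    {A U : Set X} (hU : IsOpen U) (hAU : A ⊆ U) {η : ℝ} (hη : 0 < η) :
    ∃ (u : Set X) (ρ : X → ℝ), u.Countable ∧
      (∀ x ∈ u, ρ x ∈ Ioc 0 η ∧ closedBall x (ρ x) ⊆ U) ∧
      u.PairwiseDisjoint (fun x => closedBall x (ρ x)) ∧ A ⊆ ⋃ x ∈ u, closedBall x (5 * ρ x) := by
  have hsmall : ∀ x ∈ A, ∃ ρ ∈ Ioc 0 η, closedBall x ρ ⊆ U := fun x hx => by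
    obtain ⟨ρ, hρ, hρU⟩ := nhds_basis_closedBall.mem_iff.1 (hU.mem_nhds (hAU hx))
    exact ⟨min ρ η, ⟨lt_min hρ hη, min_le_right ..⟩,
      (closedBall_subset_closedBall (min_le_left ..)).trans hρU⟩
  choose! ρ hρ hρU using hsmall
  obtain ⟨u, huA, hdisj, hcov⟩ := Vitali.exists_disjoint_subfamily_covering_enlargement_closedBall
    A id ρ η (fun x hx => (hρ x hx).2) 5 (by norm_num)
  refine ⟨u, ρ, hdisj.countable_of_nonempty_interior fun x hx => ?_,
    fun x hx => ⟨hρ x (huA hx), hρU x (huA hx)⟩, hdisj, fun x hx => ?_⟩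
  · exact ⟨x, ball_subset_interior_closedBall (mem_ball_self (hρ x (huA hx)).1)⟩
  · obtain ⟨y, hyu, hxy⟩ := hcov x hx
    exact mem_iUnion₂.2 ⟨y, hyu, hxy (mem_closedBall_self (hρ x hx).1.le)⟩

theorem tsum_ediam_closedBall_rpow_le [MeasurableSpace X] [OpensMeasurableSpace X]
    {ν : Measure X} {d : ℝ} {c : ℝ≥0} (hd : 0 ≤ d) {u U : Set X} {ρ : X → ℝ}
    (hu : u.Countable) (hdisj : u.PairwiseDisjoint fun x => closedBall x (ρ x))
    (hρ : ∀ x ∈ u, 0 ≤ ρ x) (hU : ∀ x ∈ u, closedBall x (ρ x) ⊆ U)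
    (hν : ∀ x ∈ u, ENNReal.ofReal (ρ x) ^ d ≤ c * ν (closedBall x (ρ x))) :
    ∑' x : u, ediam (closedBall (x : X) (5 * ρ x)) ^ d ≤ 10 ^ d * c * ν U := by
  have hterm (x : u) :
      ediam (closedBall (x : X) (5 * ρ x)) ^ d ≤ 10 ^ d * c * ν (closedBall x (ρ x)) :=
    calc ediam (closedBall (x : X) (5 * ρ x)) ^ d
        ≤ (2 * ENNReal.ofReal (5 * ρ x)) ^ d :=
          ENNReal.rpow_le_rpow (ediam_closedBall_le _ (mul_nonneg (by norm_num) (hρ x x.2))) hd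
      _ = 10 ^ d * ENNReal.ofReal (ρ x) ^ d := by
          rw [ENNReal.ofReal_mul (by norm_num), ← mul_assoc, ENNReal.mul_rpow_of_nonneg _ _ hd]
          norm_num
      _ ≤ 10 ^ d * (c * ν (closedBall x (ρ x))) := by gcongr; exact hν x x.2
      _ = 10 ^ d * c * ν (closedBall x (ρ x)) := (mul_assoc ..).symm
  calc ∑' x : u, ediam (closedBall (x : X) (5 * ρ x)) ^ d
      ≤ ∑' x : u, 10 ^ d * c * ν (closedBall (x : X) (ρ x)) := ENNReal.tsum_le_tsum hterm
    _ = 10 ^ d * c * ν (⋃ x ∈ u, closedBall x (ρ x)) := by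
        rw [measure_biUnion hu hdisj fun _ _ => isClosed_closedBall.measurableSet,
          ENNReal.tsum_mul_left]
    _ ≤ 10 ^ d * c * ν U := by gcongr; exact iUnion₂_subset hU

end

-- Disjoint small balls inside an open `U ⊇ A` whose 5-fold enlargements cover `A` are test
-- covers for `μH[d] A`, while disjointness bounds their total `ν`-measure by `ν U`.
theorem hausdorffMeasure_le_smul_of_rpow_le_measure_closedBall {X : Type*}
    [MetricSpace X] [TopologicalSpace.SeparableSpace X] [MeasurableSpace X] [BorelSpace X]
    {ν : Measure X} [ν.OuterRegular] {d R : ℝ} {c : ℝ≥0} (hd : 0 ≤ d) (hR : 0 < R)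
    (hν : ∀ x, ∀ ρ ∈ Ioc 0 R, ENNReal.ofReal ρ ^ d ≤ c * ν (closedBall x ρ)) :
    μH[d] ≤ (10 ^ d * c : ℝ≥0∞) • ν := by
  refine Measure.le_iff'.2 fun A => ?_
  have hopen (U : Set X) (hAU : A ⊆ U) (hU : IsOpen U) : μH[d] A ≤ 10 ^ d * c * ν U := by
    have hη (n : ℕ) : 0 < min R (1 / (n + 1)) := lt_min hR Nat.one_div_pos_of_nat
    choose u ρ hu hρ hdisj hcov using fun n =>
      exists_countable_disjoint_closedBall_cover hU hAU (hη n)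
    have (n : ℕ) : Countable (u n) := (hu n).to_subtype
    have hlim : Tendsto (fun n : ℕ => 2 * ENNReal.ofReal (5 * (1 / (n + 1)))) atTop (𝓝 0) := by
      simpa using ENNReal.Tendsto.const_mul (a := 2) (ENNReal.tendsto_ofReal
        (tendsto_one_div_add_atTop_nhds_zero_nat.const_mul (5 : ℝ))) (by simp)
    refine (Measure.hausdorffMeasure_le_liminf_tsum d A _ hlim
      (fun n (x : u n) => closedBall (x : X) (5 * ρ n x))
      (.of_forall fun n x => ?_) (.of_forall fun n => ?_)).trans
      (liminf_le_of_le (by isBoundedDefault) fun b hb => ?_)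
    · have hx := (hρ n x x.2).1
      refine (ediam_closedBall_le _ (mul_nonneg (by norm_num) hx.1.le)).trans ?_
      gcongr
      exact hx.2.trans (min_le_right ..)
    · simpa only [iUnion_subtype] using hcov n
    · obtain ⟨n, hn⟩ := hb.exists
      exact hn.trans <| tsum_ediam_closedBall_rpow_le hd (hu n) (hdisj n)
        (fun x hx => (hρ n x hx).1.1.le) (fun x hx => (hρ n x hx).2)
        fun x hx => hν x _ ⟨(hρ n x hx).1.1, (hρ n x hx).1.2.trans (min_le_left ..)⟩
  have hfin : (10 : ℝ≥0∞) ^ d * c ≠ ⊤ := by finiteness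
  have := Measure.OuterRegular.smul ν hfin
  rw [A.measure_eq_iInf_isOpen ((10 ^ d * c : ℝ≥0∞) • ν)]
  exact le_iInf₂ fun U hAU => le_iInf (hopen U hAU)

end DensityComparison

section SphereMeasure

open Set Module
open scoped ENNReal NNReal Pointwise

variable {E : Type*} [NormedAddCommGroup E] [NormedSpace ℝ E]

theorem mem_Ioo_and_mem_ball_of_smul_mem_ball {ω η : sphere (0 : E) 1} {ρ t : ℝ} (ht : 0 < t)
    (h : t • (η : E) ∈ ball (ω : E) ρ) : t ∈ Ioo (1 - ρ) (1 + ρ) ∧ η ∈ ball ω (2 * ρ) := by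
  have hη : ‖(η : E)‖ = 1 := norm_eq_of_mem_sphere η
  have hω : ‖(ω : E)‖ = 1 := norm_eq_of_mem_sphere ω
  rw [mem_ball, dist_eq_norm] at h
  have htρ : |t - 1| < ρ := by
    have := abs_norm_sub_norm_le (t • (η : E)) ω
    rw [norm_smul, hη, hω, mul_one, Real.norm_of_nonneg ht.le] at this
    exact this.trans_lt h
  refine ⟨⟨by linarith [(abs_lt.1 htρ).1], by linarith [(abs_lt.1 htρ).2]⟩, ?_⟩
  rw [mem_ball, Subtype.dist_eq, dist_eq_norm]
  calc ‖(η : E) - ω‖ = ‖(t • (η : E) - ω) - (t - 1) • (η : E)‖ := by congr 1; module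
    _ ≤ ‖t • (η : E) - ω‖ + |t - 1| := by
      simpa [norm_smul, hη] using norm_sub_le (t • (η : E) - ω) ((t - 1) • (η : E))
    _ < 2 * ρ := by linarith

variable [MeasurableSpace E] [BorelSpace E]

theorem hausdorffMeasure_restrict_sphere {s : ℝ} (hs : 0 < s) (m : ℕ) :
    (μH[m] : Measure E).restrict (sphere 0 s) = ENNReal.ofReal s ^ m •
      Measure.map (fun ω : sphere (0 : E) 1 => s • (ω : E)) μH[m] := by
  ext T hT
  have hTs : T ∩ sphere 0 s =
      s • (Subtype.val '' ((fun ω : sphere (0 : E) 1 => s • (ω : E)) ⁻¹' T)) := by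
    ext x
    simp only [mem_inter_iff, mem_sphere_zero_iff_norm, mem_smul_set_iff_inv_smul_mem₀ hs.ne',
      mem_image, mem_preimage, Subtype.exists, exists_and_right, exists_eq_right,
      smul_inv_smul₀ hs.ne', norm_smul, norm_inv, Real.norm_of_nonneg hs.le,
      inv_mul_eq_one₀ hs.ne', exists_prop]
    rw [and_comm, eq_comm]
  have hsm : (‖s‖₊ ^ (m : ℝ) : ℝ≥0∞) = ENNReal.ofReal s ^ m := by
    rw [ENNReal.rpow_natCast, ← Real.enorm_of_nonneg hs.le, enorm_eq_nnnorm]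
  rw [Measure.restrict_apply hT, hTs, Measure.hausdorffMeasure_smul₀ m.cast_nonneg hs.ne',
    isometry_subtype_coe.hausdorffMeasure_image (.inl m.cast_nonneg), Measure.smul_apply,
    Measure.map_apply (by fun_prop) hT, ENNReal.smul_def, smul_eq_mul, smul_eq_mul,
    ENNReal.coe_rpow_of_nonneg _ m.cast_nonneg, hsm]

theorem setLIntegral_sphere_eq_mul_lintegral_unitSphere {s : ℝ} (hs : 0 < s)
    (m : ℕ) (h : E → ℝ≥0∞) :
    ∫⁻ x in sphere (0 : E) s, h x ∂μH[m] =
      ENNReal.ofReal s ^ m * ∫⁻ ω : sphere (0 : E) 1, h (s • (ω : E)) ∂μH[m] := by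
  have hemb : MeasurableEmbedding fun ω : sphere (0 : E) 1 => s • (ω : E) :=
    (Homeomorph.smulOfNeZero s hs.ne').measurableEmbedding.comp
      (.subtype_coe isClosed_sphere.measurableSet)
  rw [hausdorffMeasure_restrict_sphere hs, lintegral_smul_measure, hemb.lintegral_map, smul_eq_mul]

variable [FiniteDimensional ℝ E] [Nontrivial E] (μ : Measure E) [μ.IsAddHaarMeasure]

theorem lintegral_eq_lintegral_toSphere_lintegral_Ioi {h : E → ℝ≥0∞} (hh : Measurable h) :
    ∫⁻ x, h x ∂μ = ∫⁻ ω : sphere (0 : E) 1, (∫⁻ t in Ioi (0 : ℝ),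
      ENNReal.ofReal t ^ (finrank ℝ E - 1) * h (t • (ω : E))) ∂μ.toSphere := by
  have hpolar : Measurable fun p : sphere (0 : E) 1 × Ioi (0 : ℝ) => h ((p.2 : ℝ) • (p.1 : E)) := by
    fun_prop
  calc ∫⁻ x, h x ∂μ
      = ∫⁻ x : ({0}ᶜ : Set E), h x ∂μ.comap Subtype.val := by
        rw [lintegral_subtype_comap (measurableSet_singleton _).compl, restrict_compl_singleton]
    _ = ∫⁻ p : sphere (0 : E) 1 × Ioi (0 : ℝ), h ((p.2 : ℝ) • (p.1 : E))
          ∂μ.toSphere.prod (.volumeIoiPow (finrank ℝ E - 1)) := by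
        rw [← μ.measurePreserving_homeomorphUnitSphereProd.lintegral_comp hpolar]
        refine lintegral_congr fun x => congrArg h ?_
        exact congrArg Subtype.val ((homeomorphUnitSphereProd E).symm_apply_apply x).symm
    _ = _ := by
        rw [lintegral_prod _ hpolar.aemeasurable]
        refine lintegral_congr fun ω => ?_
        rw [Measure.volumeIoiPow, lintegral_withDensity_eq_lintegral_mul _ (by fun_prop)
          (by fun_prop), ← lintegral_subtype_comap measurableSet_Ioi]
        refine lintegral_congr fun t => ?_
        simp only [Pi.mul_apply, ENNReal.ofReal_pow t.2.out.le]

-- The ball lies in the part of the cone over a cap of twice its radius with `|t - 1| < ρ`.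
theorem addHaar_ball_le_mul_toSphere_ball (ω : sphere (0 : E) 1) (ρ : ℝ) :
    μ (ball (ω : E) ρ) ≤ ENNReal.ofReal (1 + ρ) ^ (finrank ℝ E - 1) * ENNReal.ofReal (2 * ρ) *
      μ.toSphere (ball ω (2 * ρ)) := by
  set K := ENNReal.ofReal (1 + ρ) ^ (finrank ℝ E - 1)
  calc μ (ball (ω : E) ρ)
      = ∫⁻ η : sphere (0 : E) 1, (∫⁻ t in Ioi (0 : ℝ), ENNReal.ofReal t ^ (finrank ℝ E - 1) *
          (ball (ω : E) ρ).indicator 1 (t • (η : E))) ∂μ.toSphere := by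
        rw [← lintegral_indicator_one measurableSet_ball,
          lintegral_eq_lintegral_toSphere_lintegral_Ioi μ
            (measurable_one.indicator measurableSet_ball)]
    _ ≤ ∫⁻ η : sphere (0 : E) 1, (∫⁻ t : ℝ, (Ioo (1 - ρ) (1 + ρ)).indicator
          (fun _ => (ball ω (2 * ρ)).indicator (fun _ => K) η) t) ∂μ.toSphere := by
        refine lintegral_mono fun η => (setLIntegral_mono' measurableSet_Ioi fun t ht => ?_).trans
          (setLIntegral_le_lintegral _ _)
        by_cases hball : t • (η : E) ∈ ball (ω : E) ρ
        · obtain ⟨htρ, hη⟩ := mem_Ioo_and_mem_ball_of_smul_mem_ball ht hball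
          rw [indicator_of_mem hball, indicator_of_mem htρ, indicator_of_mem hη, Pi.one_apply,
            mul_one]
          exact pow_le_pow_left' (ENNReal.ofReal_le_ofReal htρ.2.le) _
        · simp only [indicator_of_notMem hball, mul_zero, zero_le]
    _ = K * ENNReal.ofReal (2 * ρ) * μ.toSphere (ball ω (2 * ρ)) := by
        simp_rw [lintegral_indicator_const measurableSet_Ioo, Real.volume_Ioo]
        rw [lintegral_mul_const' _ _ ENNReal.ofReal_ne_top,
          lintegral_indicator_const measurableSet_ball]
        ring_nf

theorem exists_pow_le_mul_toSphere_closedBall :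
    ∃ c : ℝ≥0, ∀ ω : sphere (0 : E) 1, ∀ ρ ∈ Ioc (0 : ℝ) 1,
      ENNReal.ofReal ρ ^ (finrank ℝ E - 1) ≤ c * μ.toSphere (closedBall ω ρ) := by
  obtain ⟨m, hm⟩ := Nat.exists_eq_add_one.2 (finrank_pos (R := ℝ) (M := E))
  have hV0 : μ (ball 0 1) ≠ 0 := (measure_ball_pos μ 0 one_pos).ne'
  have hV : μ (ball 0 1) ≠ ⊤ := measure_ball_lt_top.ne
  have hc : (2 * 4 ^ m / μ (ball 0 1) : ℝ≥0∞) ≠ ⊤ := by finiteness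
  refine ⟨(2 * 4 ^ m / μ (ball 0 1)).toNNReal, fun ω ρ ⟨hρ, hρ1⟩ => ?_⟩
  rw [ENNReal.coe_toNNReal hc, hm, Nat.add_sub_cancel]
  set R := ENNReal.ofReal ρ
  have hcap : (R / 2) ^ (m + 1) * μ (ball 0 1) ≤ 2 ^ m * R * μ.toSphere (closedBall ω ρ) :=
    calc (R / 2) ^ (m + 1) * μ (ball 0 1) = μ (ball (ω : E) (ρ / 2)) := by
          rw [μ.addHaar_ball _ (half_pos hρ).le, hm, ENNReal.ofReal_pow (half_pos hρ).le,
            ENNReal.ofReal_div_of_pos two_pos, ENNReal.ofReal_ofNat]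
      _ ≤ ENNReal.ofReal (1 + ρ / 2) ^ m * R * μ.toSphere (ball ω ρ) := by
          simpa only [hm, Nat.add_sub_cancel, mul_div_cancel₀ ρ (two_ne_zero' ℝ)] using
            addHaar_ball_le_mul_toSphere_ball μ ω (ρ / 2)
      _ ≤ 2 ^ m * R * μ.toSphere (closedBall ω ρ) := by
          gcongr
          · exact ENNReal.ofReal_le_of_le_toReal (by norm_num; linarith)
          · exact ball_subset_closedBall
  have hR0 : R ≠ 0 := (ENNReal.ofReal_pos.2 hρ).ne'
  have hR : R ≠ ⊤ := ENNReal.ofReal_ne_top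
  have hcancel : R ^ m * μ (ball 0 1) * R ≤ 2 * 4 ^ m * μ.toSphere (closedBall ω ρ) * R :=
    calc R ^ m * μ (ball 0 1) * R = 2 ^ (m + 1) * ((R / 2) ^ (m + 1) * μ (ball 0 1)) := by
          rw [← mul_assoc, ← mul_pow, ENNReal.mul_div_cancel two_ne_zero ENNReal.ofNat_ne_top]
          ring
      _ ≤ 2 ^ (m + 1) * (2 ^ m * R * μ.toSphere (closedBall ω ρ)) := by gcongr
      _ = 2 * 4 ^ m * μ.toSphere (closedBall ω ρ) * R := by
          rw [show (4 : ℝ≥0∞) = 2 * 2 by norm_num, mul_pow]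
          ring
  rw [← ENNReal.mul_div_right_comm]
  exact (ENNReal.le_div_iff_mul_le (.inl hV0) (.inl hV)).2
    ((ENNReal.mul_le_mul_iff_left hR0 hR).1 hcancel)

theorem exists_hausdorffMeasure_sphere_le_smul_toSphere :
    ∃ C : ℝ≥0, (μH[(finrank ℝ E - 1 : ℕ)] : Measure (sphere (0 : E) 1)) ≤ C • μ.toSphere := by
  obtain ⟨c, hc⟩ := exists_pow_le_mul_toSphere_closedBall μ
  refine ⟨10 ^ (finrank ℝ E - 1) * c, ?_⟩
  have := hausdorffMeasure_le_smul_of_rpow_le_measure_closedBall (ν := μ.toSphere) (c := c)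
    (Nat.cast_nonneg (finrank ℝ E - 1)) one_pos fun ω ρ hρ => by
      simpa only [ENNReal.rpow_natCast] using hc ω ρ hρ
  refine this.trans_eq ?_
  rw [ENNReal.rpow_natCast]
  push_cast [ENNReal.smul_def]
  rfl

end SphereMeasure

section RayEstimate

open Set
open scoped ENNReal

theorem lintegral_sq_le_measure_univ_mul {α : Type*} [MeasurableSpace α] {μ : Measure α}
    {h : α → ℝ≥0∞} (hh : AEMeasurable h μ) :
    (∫⁻ a, h a ∂μ) ^ 2 ≤ μ univ * ∫⁻ a, h a ^ 2 ∂μ := by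
  have hsq (x : ℝ≥0∞) : (x ^ (1 / 2 : ℝ)) ^ 2 = x := by
    rw [← ENNReal.rpow_natCast, ← ENNReal.rpow_mul]
    norm_num
  have := ENNReal.lintegral_mul_le_Lp_mul_Lq μ .two_two (f := 1) aemeasurable_const hh
  simp only [Pi.mul_apply, Pi.one_apply, one_mul, one_pow, lintegral_const,
    ENNReal.rpow_two] at this
  calc (∫⁻ a, h a ∂μ) ^ 2 ≤ (μ univ ^ (1 / 2 : ℝ) * (∫⁻ a, h a ^ 2 ∂μ) ^ (1 / 2 : ℝ)) ^ 2 := by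
        gcongr
    _ = μ univ * ∫⁻ a, h a ^ 2 ∂μ := by rw [mul_pow, hsq, hsq]

theorem enorm_sq_le_two_mul_enorm_sq_add_enorm_sub_sq {G : Type*} [SeminormedAddCommGroup G]
    (x y : G) : ‖x‖ₑ ^ 2 ≤ 2 * (‖y‖ₑ ^ 2 + ‖y - x‖ₑ ^ 2) := by
  have h : ‖x‖₊ ≤ ‖y‖₊ + ‖y - x‖₊ := by simpa using nnnorm_sub_le y (y - x)
  have : ‖x‖₊ ^ 2 ≤ 2 * (‖y‖₊ ^ 2 + ‖y - x‖₊ ^ 2) := (pow_le_pow_left' h 2).trans add_sq_le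
  rw [enorm_eq_nnnorm, enorm_eq_nnnorm, enorm_eq_nnnorm]
  exact_mod_cast this

variable {E F : Type*} [NormedAddCommGroup E] [NormedSpace ℝ E] [NormedAddCommGroup F]
  [NormedSpace ℝ F] {f : E → F} {r s : ℝ} {ω : E}

theorem continuousOn_fderiv_ball (hf : ContDiffOn ℝ 1 f (closedBall 0 r)) :
    ContinuousOn (fderiv ℝ f) (ball 0 r) :=
  (hf.mono ball_subset_closedBall).continuousOn_fderiv_of_isOpen isOpen_ball le_rfl

theorem measurable_indicator_ball_enorm_fderiv_sq [MeasurableSpace E] [OpensMeasurableSpace E]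
    (hf : ContDiffOn ℝ 1 f (closedBall 0 r)) :
    Measurable ((ball 0 r).indicator fun x => ‖fderiv ℝ f x‖ₑ ^ 2) := by
  classical
  rw [← piecewise_eq_indicator]
  exact ((ENNReal.continuous_pow 2).comp_continuousOn
    (continuousOn_fderiv_ball hf).enorm).measurable_piecewise continuousOn_const measurableSet_ball

theorem smul_mem_ball_of_mem_Ioo (hω : ‖ω‖ = 1) (hs : 0 ≤ s) {t : ℝ} (ht : t ∈ Ioo s r) :
    t • ω ∈ ball 0 r := by
  rw [mem_ball_zero_iff, norm_smul, hω, mul_one, Real.norm_of_nonneg (hs.trans ht.1.le)]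
  exact ht.2

theorem enorm_sub_le_lintegral_enorm_fderiv (hf : ContDiffOn ℝ 1 f (closedBall 0 r))
    (hω : ‖ω‖ = 1) (hs : 0 ≤ s) (hsr : s ≤ r) :
    ‖f (r • ω) - f (s • ω)‖ₑ ≤ ∫⁻ t in Ioo s r, ‖fderiv ℝ f (t • ω)‖ₑ := by
  have hray : MapsTo (fun t : ℝ => t • ω) (Icc s r) (closedBall 0 r) := fun t ht => by
    simpa [norm_smul, hω, abs_of_nonneg (hs.trans ht.1)] using ht.2
  have hg : ContDiffOn ℝ 1 (fun t : ℝ => f (t • ω)) (Icc s r) :=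
    hf.comp (contDiff_id.smul contDiff_const).contDiffOn hray
  refine (enorm_sub_le_lintegral_deriv_of_contDiffOn_Icc hg hsr).trans ?_
  rw [← restrict_Ioo_eq_restrict_Icc]
  refine setLIntegral_mono' measurableSet_Ioo fun t ht => ?_
  have hdf : HasFDerivAt f (fderiv ℝ f (t • ω)) (t • ω) :=
    (((hf.mono ball_subset_closedBall).differentiableOn one_ne_zero).differentiableAt
      (isOpen_ball.mem_nhds (smul_mem_ball_of_mem_Ioo hω hs ht))).hasFDerivAt
  have hderiv : HasDerivAt (fun t : ℝ => f (t • ω)) (fderiv ℝ f (t • ω) ω) t := by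
    simpa [Function.comp_def] using hdf.comp_hasDerivAt t ((hasDerivAt_id t).smul_const ω)
  rw [hderiv.deriv]
  simpa only [← ofReal_norm ω, hω, ENNReal.ofReal_one, mul_one] using
    (fderiv ℝ f (t • ω)).le_opENorm ω

theorem ofReal_pow_mul_enorm_sub_sq_le (hf : ContDiffOn ℝ 1 f (closedBall 0 r))
    (hω : ‖ω‖ = 1) (hs : 0 ≤ s) (hsr : s ≤ r) (m : ℕ) :
    ENNReal.ofReal s ^ m * ‖f (r • ω) - f (s • ω)‖ₑ ^ 2 ≤
      ENNReal.ofReal (r - s) * ∫⁻ t in Ioi 0, ENNReal.ofReal t ^ m *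
        (ball 0 r).indicator (fun x => ‖fderiv ℝ f x‖ₑ ^ 2) (t • ω) := by
  have hmeas : AEMeasurable (fun t : ℝ => ‖fderiv ℝ f (t • ω)‖ₑ) (volume.restrict (Ioo s r)) :=
    ((continuousOn_fderiv_ball hf).comp (by fun_prop) fun t ht =>
      smul_mem_ball_of_mem_Ioo hω hs ht).enorm.aemeasurable measurableSet_Ioo
  calc ENNReal.ofReal s ^ m * ‖f (r • ω) - f (s • ω)‖ₑ ^ 2
      ≤ ENNReal.ofReal s ^ m * (∫⁻ t in Ioo s r, ‖fderiv ℝ f (t • ω)‖ₑ) ^ 2 := by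
        gcongr
        exact enorm_sub_le_lintegral_enorm_fderiv hf hω hs hsr
    _ ≤ ENNReal.ofReal s ^ m *
          (ENNReal.ofReal (r - s) * ∫⁻ t in Ioo s r, ‖fderiv ℝ f (t • ω)‖ₑ ^ 2) := by
        gcongr
        simpa using lintegral_sq_le_measure_univ_mul hmeas
    _ = ENNReal.ofReal (r - s) *
          ∫⁻ t in Ioo s r, ENNReal.ofReal s ^ m * ‖fderiv ℝ f (t • ω)‖ₑ ^ 2 := by
        rw [lintegral_const_mul' _ _ (by finiteness), mul_left_comm]
    _ ≤ ENNReal.ofReal (r - s) * ∫⁻ t in Ioo s r, ENNReal.ofReal t ^ m *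
          (ball 0 r).indicator (fun x => ‖fderiv ℝ f x‖ₑ ^ 2) (t • ω) := by
        refine mul_le_mul_right (setLIntegral_mono' measurableSet_Ioo fun t ht => ?_) _
        rw [indicator_of_mem (smul_mem_ball_of_mem_Ioo hω hs ht)]
        gcongr
        exact ht.1.le
    _ ≤ _ := by
        gcongr
        exact fun t ht => hs.trans_lt ht.1

end RayEstimate

section SphereEstimate

open Set Module
open scoped ENNReal NNReal

theorem integral_norm_sq_eq_toReal_lintegral {α G : Type*} [MeasurableSpace α] {ν : Measure α}
    [NormedAddCommGroup G] {g : α → G} (hg : AEStronglyMeasurable g ν) :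
    ∫ a, ‖g a‖ ^ 2 ∂ν = (∫⁻ a, ‖g a‖ₑ ^ 2 ∂ν).toReal := by
  simpa using integral_norm_eq_lintegral_enorm (hg.norm.pow 2)

theorem setLIntegral_enorm_sq_lt_top {X G : Type*} [TopologicalSpace X] [MeasurableSpace X]
    [NormedAddCommGroup G] {ν : Measure X} {K : Set X} {g : X → G} (hK : IsCompact K)
    (hν : ν K ≠ ⊤) (hg : ContinuousOn g K) : ∫⁻ x in K, ‖g x‖ₑ ^ 2 ∂ν < ⊤ := by
  have hbdd := hK.bddAbove_image (hg.nnnorm.pow 2)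
  simpa [enorm_eq_nnnorm] using setLIntegral_lt_top_of_bddAbove hν hbdd

variable {E F : Type*} [NormedAddCommGroup E] [NormedSpace ℝ E] [FiniteDimensional ℝ E]
  [MeasurableSpace E] [BorelSpace E] {μ : Measure E} [μ.IsAddHaarMeasure]
  [NormedAddCommGroup F] [NormedSpace ℝ F] {f : E → F} {r s : ℝ} {C : ℝ≥0}

theorem setLIntegral_ball_enorm_fderiv_sq_lt_top (hr : 0 < r)
    (hf : ContDiffOn ℝ 1 f (closedBall 0 r)) :
    ∫⁻ x in ball 0 r, ‖fderiv ℝ f x‖ₑ ^ 2 ∂μ < ⊤ := by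
  have hunique : UniqueDiffOn ℝ (closedBall (0 : E) r) := uniqueDiffOn_convex
    (convex_closedBall 0 r) ⟨0, ball_subset_interior_closedBall (mem_ball_self hr)⟩
  -- `fderivWithin` is continuous up to the boundary sphere, where `fderiv` may be junk.
  calc ∫⁻ x in ball 0 r, ‖fderiv ℝ f x‖ₑ ^ 2 ∂μ
      = ∫⁻ x in ball 0 r, ‖fderivWithin ℝ f (closedBall 0 r) x‖ₑ ^ 2 ∂μ :=
        setLIntegral_congr_fun measurableSet_ball fun x hx => by
          rw [fderivWithin_of_mem_nhds (closedBall_mem_nhds_of_mem hx)]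
    _ ≤ ∫⁻ x in closedBall 0 r, ‖fderivWithin ℝ f (closedBall 0 r) x‖ₑ ^ 2 ∂μ :=
        lintegral_mono_set ball_subset_closedBall
    _ < ⊤ := setLIntegral_enorm_sq_lt_top (isCompact_closedBall 0 r)
        measure_closedBall_lt_top.ne (hf.continuousOn_fderivWithin hunique le_rfl)

variable [Nontrivial E]

theorem hausdorffMeasure_sphere_lt_top (hr : 0 < r) :
    μH[(finrank ℝ E - 1 : ℕ)] (sphere (0 : E) r) < ⊤ := by
  obtain ⟨C, hC⟩ := exists_hausdorffMeasure_sphere_le_smul_toSphere (Measure.addHaar (G := E))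
  have hunit : μH[(finrank ℝ E - 1 : ℕ)] (univ : Set (sphere (0 : E) 1)) < ⊤ :=
    (hC univ).trans_lt (measure_lt_top _ _)
  rw [← setLIntegral_one, setLIntegral_sphere_eq_mul_lintegral_unitSphere hr, lintegral_one]
  exact ENNReal.mul_lt_top (by finiteness) hunit

theorem lintegral_unitSphere_lintegral_Ioi_le
    (hC : (μH[(finrank ℝ E - 1 : ℕ)] : Measure (sphere (0 : E) 1)) ≤ C • μ.toSphere)
    {h : E → ℝ≥0∞} (hh : Measurable h) :
    ∫⁻ ω : sphere (0 : E) 1, (∫⁻ t in Ioi (0 : ℝ),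
        ENNReal.ofReal t ^ (finrank ℝ E - 1) * h (t • (ω : E))) ∂μH[(finrank ℝ E - 1 : ℕ)] ≤
      C * ∫⁻ x, h x ∂μ := by
  rw [lintegral_eq_lintegral_toSphere_lintegral_Ioi μ hh, ← smul_eq_mul, ← ENNReal.smul_def,
    ← lintegral_smul_measure]
  exact lintegral_mono' hC le_rfl

theorem setLIntegral_sphere_enorm_sq_le
    (hC : (μH[(finrank ℝ E - 1 : ℕ)] : Measure (sphere (0 : E) 1)) ≤ C • μ.toSphere)
    (hf : ContDiffOn ℝ 1 f (closedBall 0 r)) (hs : 0 < s) (hsr : s ≤ r) :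
    ∫⁻ x in sphere (0 : E) s, ‖f x‖ₑ ^ 2 ∂μH[(finrank ℝ E - 1 : ℕ)] ≤
      2 * (∫⁻ x in sphere (0 : E) r, ‖f x‖ₑ ^ 2 ∂μH[(finrank ℝ E - 1 : ℕ)] +
        ENNReal.ofReal (r - s) * (C * ∫⁻ x in ball 0 r, ‖fderiv ℝ f x‖ₑ ^ 2 ∂μ)) := by
  set m := finrank ℝ E - 1
  have hmeas := measurable_indicator_ball_enorm_fderiv_sq hf
  set G := (ball (0 : E) r).indicator fun x => ‖fderiv ℝ f x‖ₑ ^ 2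
  have hpointwise (ω : sphere (0 : E) 1) : ENNReal.ofReal s ^ m * ‖f (s • (ω : E))‖ₑ ^ 2 ≤
      2 * (ENNReal.ofReal r ^ m * ‖f (r • (ω : E))‖ₑ ^ 2 + ENNReal.ofReal (r - s) *
        ∫⁻ t in Ioi 0, ENNReal.ofReal t ^ m * G (t • (ω : E))) :=
    calc ENNReal.ofReal s ^ m * ‖f (s • (ω : E))‖ₑ ^ 2
        ≤ ENNReal.ofReal s ^ m * (2 * (‖f (r • (ω : E))‖ₑ ^ 2 +
            ‖f (r • (ω : E)) - f (s • (ω : E))‖ₑ ^ 2)) := by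
          gcongr
          exact enorm_sq_le_two_mul_enorm_sq_add_enorm_sub_sq _ _
      _ = 2 * (ENNReal.ofReal s ^ m * ‖f (r • (ω : E))‖ₑ ^ 2 +
            ENNReal.ofReal s ^ m * ‖f (r • (ω : E)) - f (s • (ω : E))‖ₑ ^ 2) := by ring
      _ ≤ _ := by
          refine mul_le_mul_right (add_le_add ?_ ?_) 2
          · gcongr
          · exact ofReal_pow_mul_enorm_sub_sq_le hf (norm_eq_of_mem_sphere ω) hs.le hsr m
  rw [setLIntegral_sphere_eq_mul_lintegral_unitSphere hs,
    setLIntegral_sphere_eq_mul_lintegral_unitSphere (hs.trans_le hsr),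
    ← lintegral_const_mul' _ _ (by finiteness)]
  refine (lintegral_mono hpointwise).trans ?_
  rw [lintegral_const_mul' _ _ (by finiteness), lintegral_add_right _ (by fun_prop),
    lintegral_const_mul' _ _ (by finiteness), lintegral_const_mul' _ _ (by finiteness),
    ← lintegral_indicator measurableSet_ball]
  gcongr
  exact lintegral_unitSphere_lintegral_Ioi_le hC hmeas

theorem integral_sphere_norm_sq_le
    (hC : (μH[(finrank ℝ E - 1 : ℕ)] : Measure (sphere (0 : E) 1)) ≤ C • μ.toSphere)
    (hf : ContDiffOn ℝ 1 f (closedBall 0 r)) (hs : 0 < s) (hsr : s ≤ r) :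
    ∫ x in sphere (0 : E) s, ‖f x‖ ^ 2 ∂μH[(finrank ℝ E - 1 : ℕ)] ≤
      2 * (∫ x in sphere (0 : E) r, ‖f x‖ ^ 2 ∂μH[(finrank ℝ E - 1 : ℕ)] +
        (r - s) * (C * ∫ x in ball 0 r, ‖fderiv ℝ f x‖ ^ 2 ∂μ)) := by
  have hr : 0 < r := hs.trans_le hsr
  have hsphere {t : ℝ} (ht : t ≤ r) : ContinuousOn f (sphere 0 t) :=
    hf.continuousOn.mono (sphere_subset_closedBall.trans (closedBall_subset_closedBall ht))
  have hsphere_lt_top := setLIntegral_enorm_sq_lt_top (isCompact_sphere 0 r)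
    (hausdorffMeasure_sphere_lt_top hr).ne (hsphere le_rfl)
  have hball_lt_top := setLIntegral_ball_enorm_fderiv_sq_lt_top (μ := μ) hr hf
  rw [integral_norm_sq_eq_toReal_lintegral
      ((hsphere hsr).aestronglyMeasurable isClosed_sphere.measurableSet),
    integral_norm_sq_eq_toReal_lintegral
      ((hsphere le_rfl).aestronglyMeasurable isClosed_sphere.measurableSet),
    integral_norm_sq_eq_toReal_lintegral
      ((continuousOn_fderiv_ball hf).aestronglyMeasurable measurableSet_ball)]
  have hle := ENNReal.toReal_mono (by finiteness) (setLIntegral_sphere_enorm_sq_le hC hf hs hsr)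
  rwa [ENNReal.toReal_mul, ENNReal.toReal_add hsphere_lt_top.ne (by finiteness),
    ENNReal.toReal_mul, ENNReal.toReal_mul, ENNReal.toReal_ofReal (sub_nonneg.2 hsr)] at hle

end SphereEstimate

theorem sup_sphere_integral_bound_general {E : Type*} [NormedAddCommGroup E] [NormedSpace ℝ E]
    [FiniteDimensional ℝ E] [Nontrivial E] [MeasurableSpace E] [BorelSpace E] (μ : Measure E)
    [μ.IsAddHaarMeasure] (F : Type*) [NormedAddCommGroup F] [NormedSpace ℝ F] :
    ∃ κ : ℝ, 1 ≤ κ ∧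
      ∀ r : ℝ, 0 < r → ∀ ε ∈ Set.Ico (0 : ℝ) 1,
        ∀ f : E → F, ContDiffOn ℝ 1 f (closedBall 0 r) →
          ∀ s ∈ Set.Icc ((1 - ε) * r) r,
            (∫ x in sphere (0 : E) s, ‖f x‖ ^ 2 ∂μH[(Module.finrank ℝ E - 1 : ℕ)]) ≤
              κ * ((∫ x in sphere (0 : E) r, ‖f x‖ ^ 2 ∂μH[(Module.finrank ℝ E - 1 : ℕ)]) +
                ε * r * ∫ x in ball (0 : E) r, ‖fderiv ℝ f x‖ ^ 2 ∂μ) := by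
  obtain ⟨C, hC⟩ := exists_hausdorffMeasure_sphere_le_smul_toSphere μ
  have hC0 : (0 : ℝ) ≤ C := C.2
  refine ⟨2 * (1 + C), by linarith, fun r hr ε hε f hf s ⟨hsε, hsr⟩ => ?_⟩
  have hs : 0 < s := (mul_pos (sub_pos.2 hε.2) hr).trans_le hsε
  have hrs : r - s ≤ ε * r := by linarith
  refine (integral_sphere_norm_sq_le hC hf hs hsr).trans ?_
  set I := ∫ x in sphere (0 : E) r, ‖f x‖ ^ 2 ∂μH[(Module.finrank ℝ E - 1 : ℕ)]
  set D := ∫ x in ball (0 : E) r, ‖fderiv ℝ f x‖ ^ 2 ∂μ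
  have hI : 0 ≤ I := integral_nonneg fun _ => sq_nonneg _
  have hD : 0 ≤ D := integral_nonneg fun _ => sq_nonneg _
  calc 2 * (I + (r - s) * (C * D)) ≤ 2 * (I + ε * r * (C * D)) := by gcongr
    _ ≤ 2 * (1 + C) * (I + ε * r * D) := by
        nlinarith [mul_nonneg hC0 hI, mul_nonneg (mul_nonneg hε.1 hr.le) hD]

/-- Display (5.18): the supremum of the sphere integrals of `f²` over radii
`s ∈ [(1−ε)r, r]` is controlled by the outer sphere integral plus a gradient term. -/
theorem sup_sphere_integral_bound :
    ∃ κ : ℝ, 1 ≤ κ ∧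
      ∀ r : ℝ, 0 < r → ∀ ε ∈ Set.Ioc (0:ℝ) (1 / 16),
        ∀ f : EuclideanSpace ℝ (Fin 3) → ℝ,
          ContDiffOn ℝ 1 f (Metric.closedBall 0 r) →
          ∀ s ∈ Set.Icc ((1 - ε) * r) r,
            (∫ x in Metric.sphere (0 : EuclideanSpace ℝ (Fin 3)) s, (f x) ^ 2 ∂μH[2]) ≤
              κ * ((∫ x in Metric.sphere (0 : EuclideanSpace ℝ (Fin 3)) r, (f x) ^ 2 ∂μH[2]) +
                ε * r * ∫ x in Metric.ball (0 : EuclideanSpace ℝ (Fin 3)) r,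
                  ‖gradient f x‖ ^ 2) := by
  obtain ⟨κ, hκ, h⟩ := sup_sphere_integral_bound_general (E := EuclideanSpace ℝ (Fin 3)) volume ℝ
  exact ⟨κ, hκ, fun r hr ε hε f hf s hs => by
    simpa [gradient] using h r hr ε ⟨hε.1.le, hε.2.trans_lt (by norm_num)⟩ f hf s hs⟩
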